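/- Let α ∈ (1/3, 1/2), c₁, c₂ > 0, and let I ⊂ ℝ₊ be bounded and separated from zero. Suppose the real sequence β_n(λ) satisfies the uniform expansion β_n(λ) = −(2^{1-α}/(c₁c₂))λ n^{-α} + O-terms at orders n^{-2α}, n^{-1}, n^{-3α} with λ-polynomial coefficients, plus Õ_I(n^{-1-α}). Then there exists N ∈ ℕ and solutions (X_n^±(λ))_{n≥N} of the Riccati equation X_n = (1+β_n)X_{n-1}/(X_{n-1}+1) − β_n (for n > N) with X_n^±(λ) = ±√(−β_n(λ)) + Õ_I(n^{-1}) as n → ∞. -/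

import Mathlib

/-- Uniform big-O on `I`: `r_n(λ) = Õ_I(h_n)`. -/
def OtildeI (I : Set ℝ) (r : ℕ → ℝ → ℝ) (h : ℕ → ℝ) : Prop :=
  ∃ C > (0 : ℝ), ∃ N : ℕ, ∀ n > N, ∀ t ∈ I, |r n t| ≤ C * |h n|

/-!
Write `β_n = -s_n ^ 2`. On `[0, ∞)` one step of the recursion contracts distances to the fixed point
`s_n` by the factor `1 - s_n`, while `s_n` itself moves only by `O(s_n / n)`; these effects balance
at distance `O(1 / n)`, so neighbourhoods of `s_n` of radius of order `1 / n` trap the recursion and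
give `X⁺`. The inverse of a step is the step conjugated by `x ↦ -x`. Hence `X⁻ = -z`, where `z` runs
the recursion backwards in `n` through the same neighbourhoods, and such a `z` exists because an
inverse limit of nonempty compact sets is nonempty.

The bound on the motion of `s_n` comes from `-β_n ≥ c n ^ (-α)` and
`β_{n+1} - β_n = O(n ^ (-1-α))`, both of which are read off the expansion of `β`.
-/

open Set Filter Asymptotics Topology CategoryTheory Opposite

theorem exists_coherent_seq {X : ℕ → Type*} [∀ n, TopologicalSpace (X n)]
    [∀ n, CompactSpace (X n)] [∀ n, T2Space (X n)] [∀ n, Nonempty (X n)]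
    {g : ∀ n, X (n + 1) → X n} (hg : ∀ n, Continuous (g n)) :
    ∃ x : ∀ n, X n, ∀ n, x n = g n (x (n + 1)) := by
  let F := Functor.ofOpSequence (X := fun n => TopCat.of (X n)) fun n => TopCat.ofHom ⟨g n, hg n⟩
  have (j : ℕᵒᵖ) : Nonempty (F.obj j) := inferInstanceAs (Nonempty (X j.unop))
  have (j : ℕᵒᵖ) : CompactSpace (F.obj j) := inferInstanceAs (CompactSpace (X j.unop))
  have (j : ℕᵒᵖ) : T2Space (F.obj j) := inferInstanceAs (T2Space (X j.unop))
  obtain ⟨x, hx⟩ := TopCat.nonempty_limitCone_of_compact_t2_cofiltered_system F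
  have hstep (n : ℕ) : F.map (homOfLE n.le_succ).op = TopCat.ofHom ⟨g n, hg n⟩ :=
    Functor.ofOpSequence_map_homOfLE_succ _ n
  refine ⟨fun n => x (op n), fun n => (hx (homOfLE n.le_succ).op).symm.trans ?_⟩
  rw [hstep]
  rfl

theorem exists_forward_orbit {E : Type*} {J : ℕ → Set E} {g : ℕ → E → E} {N : ℕ}
    (hne : (J N).Nonempty) (hg : ∀ n ≥ N, MapsTo (g n) (J n) (J (n + 1))) :
    ∃ x : ℕ → E, ∀ n ≥ N, x n ∈ J n ∧ x (n + 1) = g n (x n) := by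
  obtain ⟨x₀, hx₀⟩ := hne
  let x : ℕ → E := fun n => n.rec x₀ fun n y => if n < N then x₀ else g n y
  have hxN : x N = x₀ := by cases N <;> simp [x]
  have hx (n : ℕ) (hn : N ≤ n) : x (n + 1) = g n (x n) := if_neg hn.not_gt
  refine ⟨x, fun n hn => ⟨?_, hx n hn⟩⟩
  induction n, hn using Nat.le_induction with
  | base => rwa [hxN]
  | succ n hn ih => rw [hx n hn]; exact hg n hn ih

theorem exists_backward_orbit {E : Type*} [TopologicalSpace E] [T2Space E] {J : ℕ → Set E}
    {g : ℕ → E → E} {N : ℕ} (hcomp : ∀ n ≥ N, IsCompact (J n)) (hne : ∀ n ≥ N, (J n).Nonempty)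
    (hcont : ∀ n ≥ N, ContinuousOn (g n) (J (n + 1)))
    (hg : ∀ n ≥ N, MapsTo (g n) (J (n + 1)) (J n)) :
    ∃ x : ℕ → E, ∀ n ≥ N, x n ∈ J n ∧ x n = g n (x (n + 1)) := by
  have (k : ℕ) : CompactSpace (J (N + k)) :=
    isCompact_iff_compactSpace.1 (hcomp _ (N.le_add_right k))
  have (k : ℕ) : Nonempty (J (N + k)) := (hne _ (N.le_add_right k)).to_subtype
  obtain ⟨x, hx⟩ := exists_coherent_seq (X := fun k => J (N + k)) fun k =>
    (hcont _ (N.le_add_right k)).mapsToRestrict (hg _ (N.le_add_right k))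
  refine ⟨fun n => x (n - N), fun n hn => ?_⟩
  obtain ⟨k, rfl⟩ := Nat.exists_eq_add_of_le hn
  dsimp only
  rw [show N + k + 1 - N = k + 1 by omega, Nat.add_sub_cancel_left]
  exact ⟨(x k).2, congrArg Subtype.val (hx k)⟩

/-- One step of the Riccati recursion, `X_n = riccatiMap β_n X_{n-1}`; the value at the pole
`x = -1` is the junk value `-β`. For `-1 < β < 0` its fixed points are `±√(-β)`, and most lemmas
parametrize `β = -s ^ 2` by the positive fixed point `s`. -/
noncomputable def riccatiMap (β x : ℝ) : ℝ := (1 + β) * x / (x + 1) - β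

/-- The part of the closed ball `[s - r, s + r]` on which `riccatiMap` has no pole: the trapping
region around the fixed point `s`. -/
def nonnegBall (s r : ℝ) : Set ℝ := Ici 0 ∩ Metric.closedBall s r

section RiccatiMap

variable {β C s s' x : ℝ} {n : ℕ}

theorem riccatiMap_eq_div (hx : x ≠ -1) : riccatiMap β x = (x - β) / (x + 1) := by
  have : x + 1 ≠ 0 := fun h => hx (by linarith)
  rw [riccatiMap]
  field_simp
  ring

theorem riccatiMap_neg_riccatiMap (hβ : β ≠ -1) (hx : x ≠ -1) :
    riccatiMap β (-riccatiMap β x) = -x := by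
  have hx' : x + 1 ≠ 0 := fun h => hx (by linarith)
  have hβ' : 1 + β ≠ 0 := fun h => hβ (by linarith)
  have hden : -riccatiMap β x + 1 = (1 + β) / (x + 1) := by
    rw [riccatiMap]
    field_simp
    ring
  rw [riccatiMap, hden, riccatiMap_eq_div hx]
  field_simp
  ring

theorem continuousOn_riccatiMap (β : ℝ) : ContinuousOn (riccatiMap β) (Ici 0) := by
  unfold riccatiMap
  have hne : ∀ x ∈ Ici (0 : ℝ), x + 1 ≠ 0 := fun x hx => by linarith [mem_Ici.1 hx]
  fun_prop (disch := assumption)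

theorem riccatiMap_nonneg (hβ : β ≤ 0) (hx : 0 ≤ x) : 0 ≤ riccatiMap β x := by
  rw [riccatiMap_eq_div (by linarith)]
  exact div_nonneg (by linarith) (by linarith)

theorem abs_riccatiMap_sub_le (hs : s ≤ 1) (hx : 0 ≤ x) :
    |riccatiMap (-s ^ 2) x - s| ≤ (1 - s) * |x - s| := by
  have hfactor : riccatiMap (-s ^ 2) x - s = (1 - s) * (x - s) / (x + 1) := by
    rw [riccatiMap_eq_div (by linarith)]
    field_simp
    ring
  have hs' : 0 ≤ 1 - s := sub_nonneg.2 hs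
  have hden : |x + 1| = x + 1 := abs_of_pos (by linarith)
  rw [hfactor, abs_div, abs_mul, abs_of_nonneg hs', hden]
  exact div_le_self (by positivity) (by linarith)

-- The error contracts by `1 - s'` and increases by `C * s' / n`, which balance at the radius
-- `C / n`; twice that radius leaves room for the loss in replacing `n` by `n + 1`.
theorem mapsTo_riccatiMap_forward (hn : 0 < n) (hC : 0 ≤ C) (hs' : s' ≤ 1)
    (hlarge : 2 ≤ (n + 1) * s') (hvar : |s' - s| ≤ C * s' / n) :
    MapsTo (riccatiMap (-s' ^ 2)) (nonnegBall s (2 * C / n)) (nonnegBall s' (2 * C / (n + 1))) := by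
  rintro x ⟨hx, hxs⟩
  refine ⟨riccatiMap_nonneg (neg_nonpos.2 (sq_nonneg s')) hx, ?_⟩
  rw [Metric.mem_closedBall, Real.dist_eq] at hxs ⊢
  have hcontract : (1 - s') * (2 + s') * (n + 1) ≤ 2 * n := by nlinarith [sq_nonneg s']
  calc |riccatiMap (-s' ^ 2) x - s'|
      ≤ (1 - s') * |x - s'| := abs_riccatiMap_sub_le hs' hx
    _ ≤ (1 - s') * (2 * C / n + C * s' / n) := by
        gcongr
        exact (abs_sub_le x s s').trans (add_le_add hxs (abs_sub_comm s s' ▸ hvar))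
    _ = C * ((1 - s') * (2 + s') * (n + 1)) / (n * (n + 1)) := by field_simp
    _ ≤ C * (2 * n) / (n * (n + 1)) := by gcongr
    _ = 2 * C / (n + 1) := by field_simp

theorem mapsTo_riccatiMap_backward (hn : 0 < n) (hC : 0 ≤ C) (hs' : s' ∈ Icc 0 1)
    (hvar : |s' - s| ≤ C * s' / n) :
    MapsTo (riccatiMap (-s' ^ 2)) (nonnegBall s' (2 * C / (n + 1))) (nonnegBall s (2 * C / n)) := by
  rintro x ⟨hx, hxs⟩
  refine ⟨riccatiMap_nonneg (neg_nonpos.2 (sq_nonneg s')) hx, ?_⟩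
  rw [Metric.mem_closedBall, Real.dist_eq] at hxs ⊢
  obtain ⟨hs'0, hs'1⟩ := hs'
  calc |riccatiMap (-s' ^ 2) x - s|
      ≤ |riccatiMap (-s' ^ 2) x - s'| + |s' - s| := abs_sub_le _ _ _
    _ ≤ (1 - s') * (2 * C / n) + 2 * C * s' / n := by
        gcongr
        · refine (abs_riccatiMap_sub_le hs'1 hx).trans ?_
          gcongr
          exact hxs.trans (by gcongr; linarith)
        · exact hvar.trans (by gcongr; linarith)
    _ = 2 * C / n := by ring

end RiccatiMap

theorem abs_sqrt_sub_sqrt_le {a b D : ℝ} (ha : 0 ≤ a) (hb : 0 < b) (h : |b - a| ≤ D * b) :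
    |√b - √a| ≤ D * √b := by
  refine le_of_mul_le_mul_right ?_ (Real.sqrt_pos.2 hb)
  calc |√b - √a| * √b ≤ |√b - √a| * |√b + √a| := by
        gcongr
        exact (le_add_of_nonneg_right (Real.sqrt_nonneg a)).trans (le_abs_self _)
    _ = |b - a| := by
        rw [← abs_mul, mul_comm, ← sq_sub_sq, Real.sq_sqrt hb.le, Real.sq_sqrt ha]
    _ ≤ D * √b * √b := by rwa [mul_assoc, Real.mul_self_sqrt hb.le]

theorem exists_riccati_orbits_near {s : ℕ → ℝ} {C : ℝ} {N : ℕ} (hC : 0 ≤ C)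
    (hs : ∀ n ≥ N, s n < 1) (hlarge : ∀ n ≥ N, 2 ≤ n * s n)
    (hvar : ∀ n ≥ N, |s (n + 1) - s n| ≤ C * s (n + 1) / n) :
    ∃ x y : ℕ → ℝ,
      (∀ n ≥ N, x (n + 1) = riccatiMap (-s (n + 1) ^ 2) (x n) ∧
        y (n + 1) = riccatiMap (-s (n + 1) ^ 2) (y n)) ∧
      ∀ n ≥ N, |x n - s n| ≤ 2 * C / n ∧ |y n + s n| ≤ 2 * C / n := by
  have hs0 (n) (hn : n ≥ N) : 0 < s n :=
    pos_of_mul_pos_right (two_pos.trans_le (hlarge n hn)) n.cast_nonneg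
  have hn0 (n) (hn : n ≥ N) : 0 < n :=
    Nat.cast_pos.1 (pos_of_mul_pos_left (two_pos.trans_le (hlarge n hn)) (hs0 n hn).le)
  let J (n : ℕ) : Set ℝ := nonnegBall (s n) (2 * C / n)
  have hJ (n) (hn : n ≥ N) : (J n).Nonempty :=
    ⟨s n, (hs0 n hn).le, Metric.mem_closedBall_self (by positivity)⟩
  have hforward (n) (hn : n ≥ N) : MapsTo (riccatiMap (-s (n + 1) ^ 2)) (J n) (J (n + 1)) :=
    mod_cast mapsTo_riccatiMap_forward (hn0 n hn) hC (hs (n + 1) (by omega)).le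
      (mod_cast hlarge (n + 1) (by omega)) (hvar n hn)
  have hbackward (n) (hn : n ≥ N) : MapsTo (riccatiMap (-s (n + 1) ^ 2)) (J (n + 1)) (J n) :=
    mod_cast mapsTo_riccatiMap_backward (hn0 n hn) hC
      ⟨(hs0 (n + 1) (by omega)).le, (hs (n + 1) (by omega)).le⟩ (hvar n hn)
  obtain ⟨x, hx⟩ := exists_forward_orbit (hJ N le_rfl) hforward
  obtain ⟨z, hz⟩ := exists_backward_orbit
    (fun n _ => (isCompact_closedBall _ _).inter_left isClosed_Ici) hJ
    (fun n _ => (continuousOn_riccatiMap _).mono inter_subset_left) hbackward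
  refine ⟨x, -z, fun n hn => ⟨(hx n hn).2, ?_⟩, fun n hn => ⟨(hx n hn).1.2, ?_⟩⟩
  · have hz_nonneg : 0 ≤ z (n + 1) := (hz (n + 1) (by omega)).1.1
    have hβ : -s (n + 1) ^ 2 ≠ -1 := by
      nlinarith [hs0 (n + 1) (by omega), hs (n + 1) (by omega)]
    rw [Pi.neg_apply, Pi.neg_apply, (hz n hn).2,
      riccatiMap_neg_riccatiMap hβ (by linarith)]
  · rw [Pi.neg_apply, neg_add_eq_sub, abs_sub_comm]
    exact (hz n hn).1.2

theorem isLittleO_rpow_rpow_atTop {p q : ℝ} (hpq : p < q) :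
    (fun x : ℝ => x ^ p) =o[atTop] fun x => x ^ q := by
  refine isLittleO_of_tendsto' ?_ ?_
  · filter_upwards [eventually_gt_atTop 0] with x hx h
    exact absurd h (Real.rpow_pos_of_pos hx q).ne'
  · refine (tendsto_rpow_neg_atTop (sub_pos.2 hpq)).congr' ?_
    filter_upwards [eventually_gt_atTop 0] with x hx
    rw [neg_sub, Real.rpow_sub hx]

theorem isBigO_add_one_rpow_sub_rpow (p : ℝ) :
    (fun x : ℝ => (x + 1) ^ p - x ^ p) =O[atTop] fun x => x ^ (p - 1) := by
  have hderiv : (fun y : ℝ => y ^ p - 1 ^ p) =O[𝓝 1] fun y => y - 1 :=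
    (Real.differentiableAt_rpow_const_of_ne p one_ne_zero).isBigO_sub
  have hlim : Tendsto (fun x : ℝ => 1 + x⁻¹) atTop (𝓝 1) := by
    simpa using tendsto_inv_atTop_zero.const_add (1 : ℝ)
  refine ((isBigO_refl (fun x : ℝ => x ^ p) atTop).mul (hderiv.comp_tendsto hlim)).congr' ?_ ?_ <;>
    filter_upwards [eventually_gt_atTop 0] with x hx
  · have hfactor : x + 1 = x * (1 + x⁻¹) := by field_simp
    rw [hfactor, Real.mul_rpow hx.le (by positivity), Function.comp_apply, Real.one_rpow]
    ring
  · rw [Function.comp_apply, add_sub_cancel_left, Real.rpow_sub_one hx.ne', div_eq_mul_inv]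

theorem isEquivalent_add_one_rpow (p : ℝ) :
    (fun x : ℝ => (x + 1) ^ p) ~[atTop] fun x => x ^ p :=
  (isBigO_add_one_rpow_sub_rpow p).trans_isLittleO (isLittleO_rpow_rpow_atTop (sub_one_lt p))

/-- The filter of `n → ∞` uniformly in the parameter `t ∈ I`, for which `OtildeI I` is the ordinary
`=O`. -/
abbrev uniformAtTop (I : Set ℝ) : Filter (ℕ × ℝ) := atTop ×ˢ 𝓟 I

section Uniform

variable {I : Set ℝ}

theorem eventually_uniformAtTop {P : ℕ × ℝ → Prop} :
    (∀ᶠ x in uniformAtTop I, P x) ↔ ∃ N, ∀ n ≥ N, ∀ t ∈ I, P (n, t) := by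
  rw [eventually_prod_principal_iff, eventually_atTop]

theorem tendsto_natCast_uniformAtTop :
    Tendsto (fun x : ℕ × ℝ => (x.1 : ℝ)) (uniformAtTop I) atTop :=
  tendsto_natCast_atTop_atTop.comp tendsto_fst

theorem tendsto_succ_uniformAtTop :
    Tendsto (fun x : ℕ × ℝ => (x.1 + 1, x.2)) (uniformAtTop I) (uniformAtTop I) :=
  (tendsto_add_atTop_nat 1).prodMap tendsto_id

theorem otildeI_iff_isBigO {r : ℕ → ℝ → ℝ} {h : ℕ → ℝ} :
    OtildeI I r h ↔ (fun x : ℕ × ℝ => r x.1 x.2) =O[uniformAtTop I] fun x => h x.1 := by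
  simp only [OtildeI, isBigO_iff', eventually_uniformAtTop, Real.norm_eq_abs]
  constructor
  · rintro ⟨C, hC, N, h⟩
    exact ⟨C, hC, N + 1, h⟩
  · rintro ⟨C, hC, N, h⟩
    exact ⟨C, hC, N, fun n hn => h n hn.le⟩

theorem isBigO_one_of_isBounded_image {f : ℝ → ℝ} (hf : Bornology.IsBounded (f '' I)) :
    (fun x : ℕ × ℝ => f x.2) =O[uniformAtTop I] fun _ => (1 : ℝ) := by
  obtain ⟨M, hM⟩ := hf.exists_norm_le
  refine .of_bound M (eventually_uniformAtTop.2 ⟨0, fun n _ t ht => ?_⟩)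
  simpa using hM _ (mem_image_of_mem f ht)

theorem isTheta_succ_rpow (p : ℝ) :
    (fun x : ℕ × ℝ => ((x.1 + 1 : ℕ) : ℝ) ^ p) =Θ[uniformAtTop I] fun x => (x.1 : ℝ) ^ p := by
  have := (isEquivalent_add_one_rpow p).isTheta
  simp only [Nat.cast_add_one]
  exact ⟨this.1.comp_tendsto tendsto_natCast_uniformAtTop,
    this.2.comp_tendsto tendsto_natCast_uniformAtTop⟩

theorem exists_riccati_orbits_near_sqrt {β : ℕ → ℝ} {C : ℝ} {N : ℕ} (hC : 0 ≤ C)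
    (hβ : ∀ n ≥ N, -1 < β n) (hlarge : ∀ n ≥ N, 2 ≤ n * √(-β n))
    (hvar : ∀ n ≥ N, |β (n + 1) - β n| ≤ C * |β (n + 1) / n|) :
    ∃ x y : ℕ → ℝ,
      (∀ n ≥ N, x (n + 1) = riccatiMap (β (n + 1)) (x n) ∧
        y (n + 1) = riccatiMap (β (n + 1)) (y n)) ∧
      ∀ n ≥ N, |x n - √(-β n)| ≤ 2 * C / n ∧ |y n + √(-β n)| ≤ 2 * C / n := by
  have hneg (n) (hn : n ≥ N) : 0 < -β n :=
    Real.sqrt_pos.1 (pos_of_mul_pos_right (two_pos.trans_le (hlarge n hn)) n.cast_nonneg)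
  have hsqrt_lt (n) (hn : n ≥ N) : √(-β n) < 1 := by
    rw [Real.sqrt_lt' one_pos]
    linarith [hβ n hn]
  have hsqrt_var (n) (hn : n ≥ N) : |√(-β (n + 1)) - √(-β n)| ≤ C * √(-β (n + 1)) / n := by
    have hneg' := hneg (n + 1) (by omega)
    rw [mul_div_right_comm]
    refine abs_sqrt_sub_sqrt_le (hneg n hn).le hneg' ?_
    calc |-β (n + 1) - -β n| = |β (n + 1) - β n| := by rw [neg_sub_neg, abs_sub_comm]
      _ ≤ C * |β (n + 1) / n| := hvar n hn
      _ = C / n * -β (n + 1) := by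
        rw [abs_div, Nat.abs_cast, abs_of_neg (neg_pos.1 hneg')]
        ring
  obtain ⟨x, y, hxy, hnear⟩ := exists_riccati_orbits_near hC hsqrt_lt hlarge hsqrt_var
  refine ⟨x, y, fun n hn => ?_, hnear⟩
  simpa only [Real.sq_sqrt (hneg (n + 1) (by omega)).le, neg_neg] using hxy n hn

theorem exists_riccati_solutions_near_sqrt {β : ℕ → ℝ → ℝ}
    (hβ : ∀ᶠ x in uniformAtTop I, -1 < β x.1 x.2)
    (hlarge : ∀ᶠ x in uniformAtTop I, 2 ≤ x.1 * √(-β x.1 x.2))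
    (hvar : (fun x : ℕ × ℝ => β (x.1 + 1) x.2 - β x.1 x.2) =O[uniformAtTop I]
      fun x => β (x.1 + 1) x.2 / x.1) :
    ∃ N : ℕ, ∃ Xp Xm : ℕ → ℝ → ℝ,
      (∀ t ∈ I, ∀ n > N, Xp n t = riccatiMap (β n t) (Xp (n - 1) t) ∧
        Xm n t = riccatiMap (β n t) (Xm (n - 1) t)) ∧
      OtildeI I (fun n t => Xp n t - √(-β n t)) (fun n => (n : ℝ)⁻¹) ∧
      OtildeI I (fun n t => Xm n t + √(-β n t)) (fun n => (n : ℝ)⁻¹) := by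
  obtain ⟨C, hC, hvar⟩ := hvar.exists_pos
  obtain ⟨N, hN⟩ := eventually_uniformAtTop.1 ((hβ.and hlarge).and hvar.bound)
  have horbits (t) (ht : t ∈ I) := exists_riccati_orbits_near_sqrt hC.le
    (fun n hn => (hN n hn t ht).1.1) (fun n hn => (hN n hn t ht).1.2)
    (fun n hn => (hN n hn t ht).2)
  choose! x y hxy hnear using horbits
  have hinv (n : ℕ) : 2 * C / n = 2 * C * |(n : ℝ)⁻¹| := by
    rw [abs_inv, Nat.abs_cast, div_eq_mul_inv]
  refine ⟨N, fun n t => x t n, fun n t => y t n, fun t ht n hn => ?_,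
    ⟨2 * C, by positivity, N, fun n hn t ht => hinv n ▸ (hnear t ht n hn.le).1⟩,
    ⟨2 * C, by positivity, N, fun n hn t ht => hinv n ▸ (hnear t ht n hn.le).2⟩⟩
  simpa only [Nat.sub_add_cancel (Nat.one_le_of_lt hn)] using hxy t ht (n - 1) (by omega)

theorem eventually_two_le_mul_sqrt_neg {α c : ℝ} (hα : α < 2) (hc : 0 < c) {β : ℕ → ℝ → ℝ}
    (hβ : ∀ᶠ x in uniformAtTop I, c * (x.1 : ℝ) ^ (-α) ≤ -β x.1 x.2) :
    ∀ᶠ x in uniformAtTop I, 2 ≤ x.1 * √(-β x.1 x.2) := by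
  have hlim : Tendsto (fun x : ℕ × ℝ => c * (x.1 : ℝ) ^ (2 - α)) (uniformAtTop I) atTop :=
    ((tendsto_rpow_atTop (by linarith)).comp tendsto_natCast_uniformAtTop).const_mul_atTop hc
  filter_upwards [hβ, hlim.eventually_ge_atTop (2 ^ 2),
    tendsto_natCast_uniformAtTop.eventually_gt_atTop 0] with x hx hlarge hpos
  calc (2 : ℝ) ≤ √((x.1 : ℝ) ^ 2 * -β x.1 x.2) := Real.le_sqrt_of_sq_le <| calc
        (2 : ℝ) ^ 2 ≤ c * (x.1 : ℝ) ^ (2 - α) := hlarge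
        _ = (x.1 : ℝ) ^ 2 * (c * (x.1 : ℝ) ^ (-α)) := by
          rw [sub_eq_add_neg, Real.rpow_add hpos, Real.rpow_two]
          ring
        _ ≤ (x.1 : ℝ) ^ 2 * -β x.1 x.2 := by gcongr
    _ = x.1 * √(-β x.1 x.2) := by rw [Real.sqrt_mul (sq_nonneg _), Real.sqrt_sq hpos.le]

section Expansion

variable {ι : Type*} {S : Finset ι} {α : ℝ} {p : ι → ℝ} {a : ℝ → ℝ} {b : ι → ℝ → ℝ}
  {β : ℕ → ℝ → ℝ}

theorem isLittleO_add_leading_of_expansion (hp : ∀ i ∈ S, α < p i)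
    (hb : ∀ i ∈ S, Bornology.IsBounded (b i '' I))
    (hβ : OtildeI I
      (fun n t => β n t - (-a t * (n : ℝ) ^ (-α) + ∑ i ∈ S, b i t * (n : ℝ) ^ (-p i)))
      (fun n => (n : ℝ) ^ (-1 - α))) :
    (fun x : ℕ × ℝ => β x.1 x.2 + a x.2 * (x.1 : ℝ) ^ (-α)) =o[uniformAtTop I]
      fun x => (x.1 : ℝ) ^ (-α) := by
  have hrpow {q : ℝ} (hq : q < -α) : (fun x : ℕ × ℝ => (x.1 : ℝ) ^ q) =o[uniformAtTop I]
      fun x => (x.1 : ℝ) ^ (-α) :=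
    (isLittleO_rpow_rpow_atTop hq).comp_tendsto tendsto_natCast_uniformAtTop
  have hsum : (fun x : ℕ × ℝ => ∑ i ∈ S, b i x.2 * (x.1 : ℝ) ^ (-p i)) =o[uniformAtTop I]
      fun x => (x.1 : ℝ) ^ (-α) := .fun_sum fun i hi => by
    simpa only [one_mul] using (isBigO_one_of_isBounded_image (hb i hi)).mul_isLittleO
      (hrpow (neg_lt_neg (hp i hi)))
  refine (((otildeI_iff_isBigO.1 hβ).trans_isLittleO (hrpow (by linarith))).add hsum).congr_left
    fun x => ?_
  ring

theorem isBigO_coeff_mul_succ_rpow_sub {f : ℝ → ℝ} (hf : Bornology.IsBounded (f '' I)) {q : ℝ}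
    (hq : α ≤ q) :
    (fun x : ℕ × ℝ => f x.2 * (((x.1 : ℝ) + 1) ^ (-q) - (x.1 : ℝ) ^ (-q))) =O[uniformAtTop I]
      fun x => (x.1 : ℝ) ^ (-1 - α) := by
  have hle : (fun x : ℝ => x ^ (-q - 1)) =O[atTop] fun x => x ^ (-1 - α) := by
    rcases hq.eq_or_lt with rfl | hlt
    · rw [neg_sub_comm]
    · exact (isLittleO_rpow_rpow_atTop (by linarith)).isBigO
  simpa only [one_mul, Function.comp_def] using (isBigO_one_of_isBounded_image hf).mul
    (((isBigO_add_one_rpow_sub_rpow (-q)).trans hle).comp_tendsto tendsto_natCast_uniformAtTop)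

theorem isBigO_succ_sub_of_expansion (hp : ∀ i ∈ S, α ≤ p i) (ha : Bornology.IsBounded (a '' I))
    (hb : ∀ i ∈ S, Bornology.IsBounded (b i '' I))
    (hβ : OtildeI I
      (fun n t => β n t - (-a t * (n : ℝ) ^ (-α) + ∑ i ∈ S, b i t * (n : ℝ) ^ (-p i)))
      (fun n => (n : ℝ) ^ (-1 - α))) :
    (fun x : ℕ × ℝ => β (x.1 + 1) x.2 - β x.1 x.2) =O[uniformAtTop I]
      fun x => (x.1 : ℝ) ^ (-1 - α) := by
  have hrem := otildeI_iff_isBigO.1 hβ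
  have hrem_succ := (hrem.comp_tendsto tendsto_succ_uniformAtTop).trans
    (isTheta_succ_rpow (-1 - α)).isBigO
  have hlead := isBigO_coeff_mul_succ_rpow_sub ha (le_refl α)
  have hsum := IsBigO.fun_sum fun i hi => isBigO_coeff_mul_succ_rpow_sub (hb i hi) (hp i hi)
  refine (((hrem_succ.sub hrem).sub hlead).add hsum).congr_left fun x => ?_
  simp only [Function.comp_apply, Nat.cast_add_one, mul_sub, Finset.sum_sub_distrib]
  ring

theorem eventually_le_neg_of_isLittleO_add_leading {δ : ℝ} (hδ : 0 < δ) (ha : ∀ t ∈ I, δ ≤ a t)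
    (hβ : (fun x : ℕ × ℝ => β x.1 x.2 + a x.2 * (x.1 : ℝ) ^ (-α)) =o[uniformAtTop I]
      fun x => (x.1 : ℝ) ^ (-α)) :
    ∀ᶠ x in uniformAtTop I, δ / 2 * (x.1 : ℝ) ^ (-α) ≤ -β x.1 x.2 := by
  have hmem : ∀ᶠ x : ℕ × ℝ in uniformAtTop I, x.2 ∈ I :=
    tendsto_snd.eventually (mem_principal_self I)
  filter_upwards [hβ.bound (half_pos hδ), hmem] with x hx ht
  rw [Real.norm_eq_abs, Real.norm_of_nonneg (by positivity)] at hx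
  have : δ * (x.1 : ℝ) ^ (-α) ≤ a x.2 * (x.1 : ℝ) ^ (-α) := by
    gcongr
    exact ha _ ht
  linarith [le_abs_self (β x.1 x.2 + a x.2 * (x.1 : ℝ) ^ (-α))]

theorem tendsto_zero_of_isLittleO_add_leading (hα : 0 < α) (ha : Bornology.IsBounded (a '' I))
    (hβ : (fun x : ℕ × ℝ => β x.1 x.2 + a x.2 * (x.1 : ℝ) ^ (-α)) =o[uniformAtTop I]
      fun x => (x.1 : ℝ) ^ (-α)) :
    Tendsto (fun x : ℕ × ℝ => β x.1 x.2) (uniformAtTop I) (𝓝 0) := by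
  have hlead : (fun x : ℕ × ℝ => a x.2 * (x.1 : ℝ) ^ (-α)) =O[uniformAtTop I]
      fun x => (x.1 : ℝ) ^ (-α) := by
    simpa only [one_mul] using (isBigO_one_of_isBounded_image ha).mul (isBigO_refl _ _)
  have hO := (hβ.isBigO.sub hlead).congr_left fun x => add_sub_cancel_right _ _
  exact hO.trans_tendsto ((tendsto_rpow_neg_atTop hα).comp tendsto_natCast_uniformAtTop)

end Expansion

theorem isBigO_succ_sub_div_of_le_neg {α c : ℝ} {β : ℕ → ℝ → ℝ} (hc : 0 < c)
    (hβ : ∀ᶠ x in uniformAtTop I, c * (x.1 : ℝ) ^ (-α) ≤ -β x.1 x.2)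
    (hvar : (fun x : ℕ × ℝ => β (x.1 + 1) x.2 - β x.1 x.2) =O[uniformAtTop I]
      fun x => (x.1 : ℝ) ^ (-1 - α)) :
    (fun x : ℕ × ℝ => β (x.1 + 1) x.2 - β x.1 x.2) =O[uniformAtTop I]
      fun x => β (x.1 + 1) x.2 / x.1 := by
  have hlower : (fun x : ℕ × ℝ => (x.1 : ℝ) ^ (-α)) =O[uniformAtTop I]
      fun x => β x.1 x.2 := by
    refine .of_bound c⁻¹ (hβ.mono fun x hx => ?_)
    rw [Real.norm_of_nonneg (by positivity), Real.norm_eq_abs, inv_mul_eq_div, le_div_iff₀' hc]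
    exact hx.trans (neg_le_abs _)
  have hlower_succ := (isTheta_succ_rpow (-α)).isBigO_symm.trans
    (hlower.comp_tendsto tendsto_succ_uniformAtTop)
  refine (hvar.congr' .rfl ?_).trans
    (hlower_succ.mul (isBigO_refl (fun x : ℕ × ℝ => (x.1 : ℝ)⁻¹) _))
  filter_upwards [tendsto_natCast_uniformAtTop.eventually_gt_atTop 0] with x hx
  rw [neg_sub_comm, Real.rpow_sub_one hx.ne', div_eq_mul_inv]

end Uniform

theorem isBounded_image_of_continuous {X Y : Type*} [PseudoMetricSpace X] [ProperSpace X]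
    [PseudoMetricSpace Y] {s : Set X} {f : X → Y} (hs : Bornology.IsBounded s)
    (hf : Continuous f) : Bornology.IsBounded (f '' s) :=
  (hs.isCompact_closure.image hf).isBounded.subset (image_mono subset_closure)

theorem riccati_uniform_solution_asymptotics_general {ι : Type*} {S : Finset ι} {α δ : ℝ}
    {p : ι → ℝ} {I : Set ℝ} {a : ℝ → ℝ} {b : ι → ℝ → ℝ} {β : ℕ → ℝ → ℝ} (hα : α ∈ Ioo 0 2)
    (hp : ∀ i ∈ S, α < p i) (hδ : 0 < δ) (haδ : ∀ t ∈ I, δ ≤ a t)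
    (ha : Bornology.IsBounded (a '' I)) (hb : ∀ i ∈ S, Bornology.IsBounded (b i '' I))
    (hβ : OtildeI I
      (fun n t => β n t - (-a t * (n : ℝ) ^ (-α) + ∑ i ∈ S, b i t * (n : ℝ) ^ (-p i)))
      (fun n => (n : ℝ) ^ (-1 - α))) :
    ∃ N : ℕ, ∃ Xp Xm : ℕ → ℝ → ℝ,
      (∀ t ∈ I, ∀ n > N,
        Xp n t = (1 + β n t) * Xp (n - 1) t / (Xp (n - 1) t + 1) - β n t ∧
        Xm n t = (1 + β n t) * Xm (n - 1) t / (Xm (n - 1) t + 1) - β n t) ∧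
      OtildeI I (fun n t => Xp n t - √(-β n t)) (fun n => (n : ℝ)⁻¹) ∧
      OtildeI I (fun n t => Xm n t + √(-β n t)) (fun n => (n : ℝ)⁻¹) := by
  have hlead := isLittleO_add_leading_of_expansion hp hb hβ
  have hlower := eventually_le_neg_of_isLittleO_add_leading hδ haδ hlead
  have hvar := isBigO_succ_sub_of_expansion (fun i hi => (hp i hi).le) ha hb hβ
  exact exists_riccati_solutions_near_sqrt
    ((tendsto_zero_of_isLittleO_add_leading hα.1 ha hlead).eventually_const_lt neg_one_lt_zero)
    (eventually_two_le_mul_sqrt_neg hα.2 (half_pos hδ) hlower)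
    (isBigO_succ_sub_div_of_le_neg (half_pos hδ) hlower hvar)

/-- Uniform asymptotics of two solutions of the Riccati equation:
`X_n^±(λ) = ±√(−β_n(λ)) + Õ_I(n^{-1})`. -/
theorem riccati_uniform_solution_asymptotics (α c₁ c₂ : ℝ)
    (hα : α ∈ Set.Ioo (1/3 : ℝ) (1/2)) (hc₁ : 0 < c₁) (hc₂ : 0 < c₂)
    (I : Set ℝ) (hIbdd : Bornology.IsBounded I)
    (hIpos : ∃ δ > (0 : ℝ), ∀ t ∈ I, δ ≤ t)
    (β : ℕ → ℝ → ℝ) (P₂ P₁ P₃ : Polynomial ℝ)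
    (hβ : OtildeI I
      (fun n t => β n t -
        (-(2 ^ (1 - α) / (c₁ * c₂)) * t * (n : ℝ) ^ (-α) +
          P₂.eval t * (n : ℝ) ^ (-(2 * α)) + P₁.eval t * (n : ℝ)⁻¹ +
          P₃.eval t * (n : ℝ) ^ (-(3 * α))))
      (fun n => (n : ℝ) ^ (-1 - α))) :
    ∃ N : ℕ, ∃ Xp Xm : ℕ → ℝ → ℝ,
      (∀ t ∈ I, ∀ n > N,
        Xp n t = (1 + β n t) * Xp (n - 1) t / (Xp (n - 1) t + 1) - β n t ∧
        Xm n t = (1 + β n t) * Xm (n - 1) t / (Xm (n - 1) t + 1) - β n t) ∧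
      OtildeI I (fun n t => Xp n t - Real.sqrt (-β n t)) (fun n => (n : ℝ)⁻¹) ∧
      OtildeI I (fun n t => Xm n t + Real.sqrt (-β n t)) (fun n => (n : ℝ)⁻¹) := by
  obtain ⟨hα₁, hα₂⟩ := hα
  obtain ⟨δ, hδ, hδI⟩ := hIpos
  refine riccati_uniform_solution_asymptotics_general (S := Finset.univ) (α := α)
    (δ := 2 ^ (1 - α) / (c₁ * c₂) * δ) (p := ![2 * α, 1, 3 * α])
    (a := fun t => 2 ^ (1 - α) / (c₁ * c₂) * t) (b := fun i => (![P₂, P₁, P₃] i).eval)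
    ⟨by linarith, by linarith⟩ ?_ (by positivity) (fun t ht => by gcongr; exact hδI t ht)
    (isBounded_image_of_continuous hIbdd (by fun_prop))
    (fun i _ => isBounded_image_of_continuous hIbdd (by fun_prop)) ?_
  · intro i _
    fin_cases i <;> norm_num <;> linarith
  · simpa [Fin.sum_univ_three, Real.rpow_neg_one, add_assoc] using hβ
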